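/- Let H be a complex Hilbert space, J a signature operator on H, L a densely defined positive self-adjoint operator in H, and B := JL. Assume B is similar to a self-adjoint operator in H. Then for every pair φ₊ ∈ H₊, φ₋ ∈ H₋ and every 0 < τ < ∞, there exists a unique strong solution ψ of the boundary value problem dψ/dx = −Bψ(x) (0 < x < τ), P₊ψ(0) = φ₊, P₋ψ(τ) = φ₋. -/

import Mathlib

open scoped ComplexOrder InnerProductSpace

noncomputable section

variable {H : Type*} [NormedAddCommGroup H] [InnerProductSpace ℂ H] [CompleteSpace H]

/-- `J` is a signature operator: `J = J* = J⁻¹`. -/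
def IsSignatureOperator (J : H →L[ℂ] H) : Prop :=
  IsSelfAdjoint J ∧ J.comp J = ContinuousLinearMap.id ℂ H

/-- The orthogonal projection onto `H₊ = ker (J - I)`, which equals `(I + J)/2`
for a signature operator `J`. -/
def Pplus (J : H →L[ℂ] H) : H →L[ℂ] H := (2⁻¹ : ℂ) • (ContinuousLinearMap.id ℂ H + J)

/-- The orthogonal projection onto `H₋ = ker (J + I)`, which equals `(I - J)/2`
for a signature operator `J`. -/
def Pminus (J : H →L[ℂ] H) : H →L[ℂ] H := (2⁻¹ : ℂ) • (ContinuousLinearMap.id ℂ H - J)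

/-- The composition `J ∘ L` of a bounded operator `J` with an unbounded operator `L`,
as an unbounded operator with the same domain as `L`. -/
def pmapComp (J : H →L[ℂ] H) (L : H →ₗ.[ℂ] H) : H →ₗ.[ℂ] H :=
  { domain := L.domain
    toFun := (J : H →ₗ[ℂ] H).comp L.toFun }

/-- `L` is a positive operator: `⟨L h, h⟩ > 0` for every nonzero `h ∈ dom L`. -/
def IsPositivePMap (L : H →ₗ.[ℂ] H) : Prop :=
  ∀ h : L.domain, (h : H) ≠ 0 → 0 < ⟪L h, (h : H)⟫_ℂ

/-- `B` is similar to a self-adjoint operator: there is a bounded operator `S` with bounded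
inverse mapping `dom B` onto the domain of a self-adjoint operator `A` such that
`A (S h) = S (B h)` for all `h ∈ dom B`. -/
def SimilarToSelfAdjoint (B : H →ₗ.[ℂ] H) : Prop :=
  ∃ (S : H ≃L[ℂ] H) (A : H →ₗ.[ℂ] H), IsSelfAdjoint A ∧
    (A.domain : Set H) = (fun h => S h) '' (B.domain : Set H) ∧
    ∀ (h : B.domain) (hSh : S (h : H) ∈ A.domain), A ⟨S (h : H), hSh⟩ = S (B h)

/-- `ψ` solves `ψ' = -B ψ + f` on the set `s` with a continuous derivative:
on `s`, `ψ` takes values in `dom B`, is differentiable with derivative `ψ'`,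
`ψ'` is continuous on `s`, and `ψ' x = -B (ψ x) + f x`. -/
def IsStrongSolutionOn (B : H →ₗ.[ℂ] H) (f : ℝ → H) (ψ : ℝ → H) (s : Set ℝ) : Prop :=
  ∃ ψ' : ℝ → H, ContinuousOn ψ' s ∧
    ∀ x ∈ s, HasDerivAt ψ (ψ' x) x ∧
      ∃ hx : ψ x ∈ B.domain, ψ' x = -(B ⟨ψ x, hx⟩) + f x

/-!
Along a solution of `ψ' = -JLψ` the indefinite energy `re ⟪Jψ, ψ⟫` has derivative
`-2 re ⟪Lψ, ψ⟫`, hence decreases. By the identity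
`re ⟪P₊ a + P₋ b, a + b⟫ = (‖a + b‖² + re ⟪Ja, a⟫ - re ⟪Jb, b⟫) / 2`, applied to `a = ψ 0` and
`b = ψ τ`, the boundary data `P₊ ψ(0) + P₋ ψ(τ)` therefore control `u = ψ 0 + ψ τ`. So it is enough
to know that the antiperiodic problem `ψ 0 + ψ τ = u` is well posed: its solution operator composed
with the boundary map is a bounded coercive operator, which is bijective by Lax-Milgram.

Antiperiodic well-posedness is invariant under similarity, so the equation may be taken to be
`ψ' = -Aψ` with `A` self-adjoint. Existence is given by `ψ x = q_x(A) u` with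
`q_x(t) = e^{-xt} / (1 + e^{-τt})`, which is bounded by `1` for both signs of `t`; the functional
calculus of the unbounded `A` is obtained from that of the bounded normal operator `(A + i)⁻¹`.
Uniqueness is a reflection argument: `re ⟪ψ x, ψ (a + b - x)⟫` does not depend on `x`, so that
`ψ τ = -ψ 0` gives `-‖ψ 0‖² = ‖ψ (τ / 2)‖²`, and then all other values vanish in the same way.
-/

section SignatureOperator

variable {E : Type*} [NormedAddCommGroup E] [InnerProductSpace ℂ E] {J : E →L[ℂ] E}

theorem Pplus_apply_of_apply_eq {x : E} (hx : J x = x) : Pplus J x = x := by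
  simp only [Pplus, smul_apply, add_apply, ContinuousLinearMap.id_apply, hx]
  module

theorem Pplus_apply_of_apply_eq_neg {x : E} (hx : J x = -x) : Pplus J x = 0 := by
  simp [Pplus, hx]

theorem Pminus_apply_of_apply_eq {x : E} (hx : J x = x) : Pminus J x = 0 := by
  simp [Pminus, hx]

theorem Pminus_apply_of_apply_eq_neg {x : E} (hx : J x = -x) : Pminus J x = x := by
  simp only [Pminus, smul_apply, sub_apply, ContinuousLinearMap.id_apply, hx]
  module

theorem re_inner_Pplus_add_Pminus (hJ : (J : E →ₗ[ℂ] E).IsSymmetric) (a b : E) :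
    (⟪Pplus J a + Pminus J b, a + b⟫_ℂ).re =
      (‖a + b‖ ^ 2 + J.reApplyInnerSelf a - J.reApplyInnerSelf b) / 2 := by
  have hsymm : (⟪J a, b⟫_ℂ).re = (⟪J b, a⟫_ℂ).re :=
    (congrArg Complex.re (hJ a b)).trans (inner_re_symm (𝕜 := ℂ) a (J b))
  have hsplit : Pplus J a + Pminus J b = ((2⁻¹ : ℝ) : ℂ) • ((a + b) + (J a - J b)) := by
    simp only [Pplus, Pminus, smul_apply, add_apply, sub_apply, ContinuousLinearMap.id_apply]
    push_cast
    module
  have hnorm : (⟪a + b, a + b⟫_ℂ).re = ‖a + b‖ ^ 2 := inner_self_eq_norm_sq (𝕜 := ℂ) (a + b)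
  rw [hsplit, inner_smul_left, Complex.conj_ofReal, Complex.re_ofReal_mul, inner_add_left,
    Complex.add_re, hnorm]
  simp only [inner_sub_left, inner_add_right, Complex.add_re, Complex.sub_re,
    ContinuousLinearMap.reApplyInnerSelf_apply, RCLike.re_eq_complex_re]
  linarith

theorem norm_sq_add_div_two_le_norm_inner (hJ : (J : E →ₗ[ℂ] E).IsSymmetric) {a b : E}
    (hab : J.reApplyInnerSelf b ≤ J.reApplyInnerSelf a) :
    ‖a + b‖ ^ 2 * 2⁻¹ ≤ ‖⟪Pplus J a + Pminus J b, a + b⟫_ℂ‖ := by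
  have hre := re_inner_Pplus_add_Pminus hJ a b
  have hle := Complex.re_le_norm ⟪Pplus J a + Pminus J b, a + b⟫_ℂ
  linarith

end SignatureOperator

theorem IsPositivePMap.re_inner_nonneg {E : Type*} [NormedAddCommGroup E] [InnerProductSpace ℂ E]
    {L : E →ₗ.[ℂ] E} (hL : IsPositivePMap L) (h : L.domain) : 0 ≤ (⟪L h, (h : E)⟫_ℂ).re := by
  rcases eq_or_ne (h : E) 0 with h0 | hne
  · rw [h0, inner_zero_right, Complex.zero_re]
  · exact (Complex.lt_def.1 (hL h hne)).1.le

namespace IsSignatureOperator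

variable {J : H →L[ℂ] H}

theorem apply_apply (hJ : IsSignatureOperator J) (x : H) : J (J x) = x :=
  DFunLike.congr_fun hJ.2 x

theorem isSymmetric (hJ : IsSignatureOperator J) : (J : H →ₗ[ℂ] H).IsSymmetric :=
  hJ.1.isSymmetric

theorem apply_Pplus (hJ : IsSignatureOperator J) (x : H) : J (Pplus J x) = Pplus J x := by
  simp [Pplus, hJ.apply_apply, add_comm]

theorem apply_Pminus (hJ : IsSignatureOperator J) (x : H) : J (Pminus J x) = -Pminus J x := by
  simp [Pminus, hJ.apply_apply, ← smul_neg]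

theorem Pplus_add_Pminus_eq_iff (hJ : IsSignatureOperator J) {a b φp φm : H}
    (hφp : J φp = φp) (hφm : J φm = -φm) :
    Pplus J a + Pminus J b = φp + φm ↔ Pplus J a = φp ∧ Pminus J b = φm := by
  refine ⟨fun h => ?_, fun h => congrArg₂ _ h.1 h.2⟩
  have hp := congrArg (Pplus J) h
  have hm := congrArg (Pminus J) h
  rw [map_add, map_add] at hp hm
  rw [Pplus_apply_of_apply_eq (hJ.apply_Pplus a),
    Pplus_apply_of_apply_eq_neg (hJ.apply_Pminus b), Pplus_apply_of_apply_eq hφp,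
    Pplus_apply_of_apply_eq_neg hφm, add_zero, add_zero] at hp
  rw [Pminus_apply_of_apply_eq (hJ.apply_Pplus a),
    Pminus_apply_of_apply_eq_neg (hJ.apply_Pminus b), Pminus_apply_of_apply_eq hφp,
    Pminus_apply_of_apply_eq_neg hφm, zero_add, zero_add] at hm
  exact ⟨hp, hm⟩

end IsSignatureOperator

namespace IsStrongSolutionOn

variable {E F : Type*} [NormedAddCommGroup E] [InnerProductSpace ℂ E]
  [NormedAddCommGroup F] [InnerProductSpace ℂ F] {B : E →ₗ.[ℂ] E} {s : Set ℝ}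

theorem mono {f ψ : ℝ → E} {t : Set ℝ} (h : IsStrongSolutionOn B f ψ s) (hts : t ⊆ s) :
    IsStrongSolutionOn B f ψ t := by
  obtain ⟨ψ', hψ', hsol⟩ := h
  exact ⟨ψ', hψ'.mono hts, fun x hx => hsol x (hts hx)⟩

theorem sub {f₁ f₂ ψ₁ ψ₂ : ℝ → E} (h₁ : IsStrongSolutionOn B f₁ ψ₁ s)
    (h₂ : IsStrongSolutionOn B f₂ ψ₂ s) :
    IsStrongSolutionOn B (fun x => f₁ x - f₂ x) (fun x => ψ₁ x - ψ₂ x) s := by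
  obtain ⟨ψ₁', hcont₁, hsol₁⟩ := h₁
  obtain ⟨ψ₂', hcont₂, hsol₂⟩ := h₂
  refine ⟨fun x => ψ₁' x - ψ₂' x, hcont₁.sub hcont₂, fun x hx => ?_⟩
  obtain ⟨hderiv₁, hmem₁, heq₁⟩ := hsol₁ x hx
  obtain ⟨hderiv₂, hmem₂, heq₂⟩ := hsol₂ x hx
  refine ⟨hderiv₁.sub hderiv₂, B.domain.sub_mem hmem₁ hmem₂, ?_⟩
  have hsub : B ⟨ψ₁ x - ψ₂ x, B.domain.sub_mem hmem₁ hmem₂⟩ = B ⟨ψ₁ x, hmem₁⟩ - B ⟨ψ₂ x, hmem₂⟩ :=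
    B.map_sub ⟨ψ₁ x, hmem₁⟩ ⟨ψ₂ x, hmem₂⟩
  dsimp only
  rw [heq₁, heq₂, hsub]
  abel

theorem map {C : F →ₗ.[ℂ] F} {f ψ : ℝ → E} (h : IsStrongSolutionOn B f ψ s) (T : E →L[ℂ] F)
    (hT : ∀ x : B.domain, ∃ hx : T x ∈ C.domain, C ⟨T x, hx⟩ = T (B x)) :
    IsStrongSolutionOn C (fun x => T (f x)) (fun x => T (ψ x)) s := by
  obtain ⟨ψ', hcont, hsol⟩ := h
  refine ⟨fun x => T (ψ' x), T.continuous.comp_continuousOn hcont, fun x hx => ?_⟩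
  obtain ⟨hderiv, hmem, heq⟩ := hsol x hx
  obtain ⟨hTmem, hTeq⟩ := hT ⟨ψ x, hmem⟩
  refine ⟨(T.restrictScalars ℝ).hasFDerivAt.comp_hasDerivAt x hderiv, hTmem, ?_⟩
  dsimp only
  rw [hTeq, heq, map_add, map_neg]

theorem exists_hasDerivAt {ψ : ℝ → E} (h : IsStrongSolutionOn B (fun _ => 0) ψ s) {x : ℝ}
    (hx : x ∈ s) : ∃ hmem : ψ x ∈ B.domain, HasDerivAt ψ (-B ⟨ψ x, hmem⟩) x := by
  obtain ⟨ψ', -, hsol⟩ := h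
  obtain ⟨hderiv, hmem, heq⟩ := hsol x hx
  rw [heq, add_zero] at hderiv
  exact ⟨hmem, hderiv⟩

theorem antitoneOn_reApplyInnerSelf {J : E →L[ℂ] E} (hJ : (J : E →ₗ[ℂ] E).IsSymmetric)
    (hJB : ∀ x : B.domain, 0 ≤ (⟪J (B x), (x : E)⟫_ℂ).re) {ψ : ℝ → E} {a b : ℝ}
    (hψ : ContinuousOn ψ (Set.Icc a b))
    (h : IsStrongSolutionOn B (fun _ => 0) ψ (Set.Ioo a b)) :
    AntitoneOn (fun x => J.reApplyInnerSelf (ψ x)) (Set.Icc a b) := by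
  have hderiv : ∀ x ∈ interior (Set.Icc a b), ∃ d ≤ 0,
      HasDerivAt (fun x => J.reApplyInnerSelf (ψ x)) d x := by
    rw [interior_Icc]
    intro x hx
    obtain ⟨hmem, hψx⟩ := h.exists_hasDerivAt hx
    have hJψx := (J.restrictScalars ℝ).hasFDerivAt.comp_hasDerivAt x hψx
    have hd := Complex.reCLM.hasFDerivAt.comp_hasDerivAt x (hJψx.inner ℂ hψx)
    refine ⟨_, ?_, hd⟩
    have hsymm : (⟪J (ψ x), B ⟨ψ x, hmem⟩⟫_ℂ).re = (⟪J (B ⟨ψ x, hmem⟩), ψ x⟫_ℂ).re :=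
      (congrArg Complex.re (hJ _ _)).trans (inner_re_symm (𝕜 := ℂ) _ _)
    have hpos := hJB ⟨ψ x, hmem⟩
    simp only [Function.comp_apply, Complex.reCLM_apply, ContinuousLinearMap.coe_restrictScalars',
      map_neg, inner_neg_left, inner_neg_right, Complex.add_re, Complex.neg_re, hsymm]
    linarith
  refine antitoneOn_of_deriv_nonpos (convex_Icc a b)
    (J.reApplyInnerSelf_continuous.comp_continuousOn hψ) (fun x hx => ?_) fun x hx => ?_
  · obtain ⟨d, -, hd⟩ := hderiv x hx
    exact hd.differentiableAt.differentiableWithinAt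
  · obtain ⟨d, hd0, hd⟩ := hderiv x hx
    exact hd.deriv.trans_le hd0

/-- This holds because `x ↦ re ⟪ψ x, ψ (a + b - x)⟫` has derivative `0`. -/
theorem re_inner_eq_norm_midpoint_sq (hB : B.IsFormalAdjoint B) {ψ : ℝ → E} {a b : ℝ}
    (hab : a ≤ b) (hψ : ContinuousOn ψ (Set.Icc a b))
    (h : IsStrongSolutionOn B (fun _ => 0) ψ (Set.Ioo a b)) :
    (⟪ψ a, ψ b⟫_ℂ).re = ‖ψ ((a + b) / 2)‖ ^ 2 := by
  rcases hab.eq_or_lt with rfl | hab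
  · rw [add_self_div_two]
    exact inner_self_eq_norm_sq (𝕜 := ℂ) (ψ a)
  let g : ℝ → ℝ := fun x => (⟪ψ x, ψ (a + b - x)⟫_ℂ).re
  have hcont : ContinuousOn g (Set.Icc a b) := by
    refine Complex.continuous_re.comp_continuousOn (hψ.inner (hψ.comp (by fun_prop) fun x hx => ?_))
    exact ⟨by linarith [hx.2], by linarith [hx.1]⟩
  have hderiv : ∀ x ∈ Set.Ioo a b, HasDerivAt g 0 x := by
    intro x hx
    have hx' : a + b - x ∈ Set.Ioo a b := ⟨by linarith [hx.2], by linarith [hx.1]⟩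
    obtain ⟨hmem, hψx⟩ := h.exists_hasDerivAt hx
    obtain ⟨hmem', hψx'⟩ := h.exists_hasDerivAt hx'
    have hreflect := hψx'.scomp x ((hasDerivAt_id x).const_sub (a + b))
    have hg := Complex.reCLM.hasFDerivAt.comp_hasDerivAt x (hψx.inner ℂ hreflect)
    refine hg.congr_deriv ?_
    have hsymm := hB ⟨ψ x, hmem⟩ ⟨ψ (a + b - x), hmem'⟩
    simp [hsymm]
  obtain ⟨c, -, hslope⟩ := exists_hasDerivAt_eq_slope g (fun _ => 0)
    (by linarith : a < (a + b) / 2)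
    (hcont.mono (Set.Icc_subset_Icc_right (by linarith)))
    (fun x hx => hderiv x ⟨hx.1, by linarith [hx.2]⟩)
  have hconst : g ((a + b) / 2) = g a := by
    rw [eq_comm, div_eq_zero_iff] at hslope
    rcases hslope with hslope | hslope <;> linarith
  simp only [g, add_sub_cancel_left, sub_half] at hconst
  rw [← hconst]
  exact inner_self_eq_norm_sq (𝕜 := ℂ) _

theorem eqOn_zero_of_antiperiodic (hB : B.IsFormalAdjoint B) {ψ : ℝ → E} {τ : ℝ} (hτ : 0 ≤ τ)
    (hψ : ContinuousOn ψ (Set.Icc 0 τ))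
    (h : IsStrongSolutionOn B (fun _ => 0) ψ (Set.Ioo 0 τ)) (hanti : ψ 0 + ψ τ = 0) :
    Set.EqOn ψ 0 (Set.Icc 0 τ) := by
  have hmid {a b : ℝ} (ha : 0 ≤ a) (hab : a ≤ b) (hb : b ≤ τ) :
      (⟪ψ a, ψ b⟫_ℂ).re = ‖ψ ((a + b) / 2)‖ ^ 2 :=
    re_inner_eq_norm_midpoint_sq hB hab (hψ.mono (Set.Icc_subset_Icc ha hb))
      (h.mono (Set.Ioo_subset_Ioo ha hb))
  have hτ_eq : ψ τ = -ψ 0 := eq_neg_of_add_eq_zero_right hanti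
  have hψ0 : ψ 0 = 0 := by
    have hsq := hmid le_rfl hτ le_rfl
    have hself : (⟪ψ 0, ψ 0⟫_ℂ).re = ‖ψ 0‖ ^ 2 := inner_self_eq_norm_sq (𝕜 := ℂ) (ψ 0)
    rw [hτ_eq, inner_neg_right, Complex.neg_re, hself] at hsq
    have : ‖ψ 0‖ ^ 2 = 0 := by nlinarith [sq_nonneg ‖ψ 0‖, sq_nonneg ‖ψ ((0 + τ) / 2)‖]
    simpa using this
  have hψτ : ψ τ = 0 := by rw [hτ_eq, hψ0, neg_zero]
  intro x hx
  rcases le_total x (τ / 2) with hxτ | hxτ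
  · have hsq := hmid le_rfl (mul_nonneg zero_le_two hx.1) (by linarith)
    rw [hψ0, inner_zero_left, show (0 + 2 * x) / 2 = x by ring] at hsq
    simpa using hsq.symm
  · have hsq := hmid (a := 2 * x - τ) (by linarith) (by linarith [hx.2]) le_rfl
    rw [hψτ, inner_zero_right, show (2 * x - τ + τ) / 2 = x by ring] at hsq
    simpa using hsq.symm

end IsStrongSolutionOn

section Resolvent

theorem norm_sq_apply_add_smul {E : Type*} [NormedAddCommGroup E] [InnerProductSpace ℂ E]
    {A : E →ₗ.[ℂ] E} (hA : A.IsFormalAdjoint A) (ζ : ℂ) (x : A.domain) :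
    ‖A x + ζ • (x : E)‖ ^ 2 = ‖A x + (ζ.re : ℂ) • (x : E)‖ ^ 2 + ζ.im ^ 2 * ‖(x : E)‖ ^ 2 := by
  have hreal : (⟪A x, (x : E)⟫_ℂ).im = 0 :=
    Complex.conj_eq_iff_im.1 ((inner_conj_symm (x : E) (A x)).trans (hA x x).symm)
  have horth : RCLike.re ⟪A x + (ζ.re : ℂ) • (x : E), (ζ.im * Complex.I) • (x : E)⟫_ℂ = 0 := by
    rw [inner_smul_right, inner_add_left, inner_smul_left, inner_self_eq_norm_sq_to_K]
    simp [hreal, ← Complex.ofReal_pow]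
  have hsplit : A x + ζ • (x : E) =
      (A x + (ζ.re : ℂ) • (x : E)) + (ζ.im * Complex.I) • (x : E) := by
    rw [add_assoc, ← add_smul, Complex.re_add_im]
  rw [hsplit, norm_add_sq (𝕜 := ℂ), horth, norm_smul, norm_mul, Complex.norm_I,
    Complex.norm_real, mul_one, mul_pow, Real.norm_eq_abs, sq_abs, mul_zero, add_zero]

theorem abs_im_mul_norm_le {E : Type*} [NormedAddCommGroup E] [InnerProductSpace ℂ E]
    {A : E →ₗ.[ℂ] E} (hA : A.IsFormalAdjoint A) (ζ : ℂ) (x : A.domain) :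
    |ζ.im| * ‖(x : E)‖ ≤ ‖A x + ζ • (x : E)‖ := by
  refine le_of_sq_le_sq ?_ (norm_nonneg _)
  rw [mul_pow, sq_abs, norm_sq_apply_add_smul hA]
  exact le_add_of_nonneg_left (sq_nonneg _)

variable {A : H →ₗ.[ℂ] H} {R : H →L[ℂ] H}

theorem isFormalAdjoint_self_of_isSelfAdjoint (hA : IsSelfAdjoint A) : A.IsFormalAdjoint A := by
  have h := LinearPMap.adjoint_isFormalAdjoint hA.dense_domain
  rwa [LinearPMap.isSelfAdjoint_def.1 hA] at h

theorem exists_apply_eq_of_isSelfAdjoint (hA : IsSelfAdjoint A) {y w : H}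
    (h : ∀ x : A.domain, ⟪w, (x : H)⟫_ℂ = ⟪y, A x⟫_ℂ) :
    ∃ hy : y ∈ A.domain, A ⟨y, hy⟩ = w := by
  have hmem : (y, w) ∈ A.adjoint.graph :=
    (LinearPMap.mem_graph_iff _).2 ⟨⟨y, LinearPMap.mem_adjoint_domain_of_exists y ⟨w, h⟩⟩, rfl,
      LinearPMap.adjoint_apply_eq hA.dense_domain _ h⟩
  rw [LinearPMap.isSelfAdjoint_def.1 hA, LinearPMap.mem_graph_iff] at hmem
  obtain ⟨⟨z, hz⟩, rfl, hw⟩ := hmem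
  exact ⟨hz, hw⟩

theorem isClosed_range_add_smul_subtype (hA : IsSelfAdjoint A) {ζ : ℂ} (hζ : ζ.im ≠ 0) :
    IsClosed ((A.toFun + ζ • A.domain.subtype).range : Set H) := by
  let T : A.graph →L[ℂ] H :=
    (ContinuousLinearMap.snd ℂ H H + ζ • ContinuousLinearMap.fst ℂ H H).comp A.graph.subtypeL
  have hT (x : A.domain) : T ⟨_, A.mem_graph x⟩ = A x + ζ • (x : H) := rfl
  have hanti : AntilipschitzWith (1 + (1 + ‖ζ‖₊) * ‖ζ.im‖₊⁻¹) T := by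
    refine T.antilipschitz_of_bound fun ⟨⟨a, b⟩, hab⟩ => ?_
    obtain ⟨x, rfl, rfl⟩ := (LinearPMap.mem_graph_iff A).1 hab
    have hx : ‖(x : H)‖ ≤ ‖ζ.im‖⁻¹ * ‖A x + ζ • (x : H)‖ :=
      (le_inv_mul_iff₀ (norm_pos_iff.2 hζ)).2
        (abs_im_mul_norm_le (isFormalAdjoint_self_of_isSelfAdjoint hA) ζ x)
    have hAx : ‖A x‖ ≤ ‖A x + ζ • (x : H)‖ + ‖ζ‖ * ‖(x : H)‖ := by
      simpa [norm_smul] using norm_sub_le (A x + ζ • (x : H)) (ζ • (x : H))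
    have hmul : ‖ζ‖ * ‖(x : H)‖ ≤ ‖ζ‖ * (‖ζ.im‖⁻¹ * ‖A x + ζ • (x : H)‖) := by gcongr
    have h0 : 0 ≤ ‖ζ.im‖⁻¹ * ‖A x + ζ • (x : H)‖ := by positivity
    rw [hT]
    push_cast
    refine max_le ?_ ?_
    · change ‖(x : H)‖ ≤ _
      nlinarith [norm_nonneg (A x + ζ • (x : H)), norm_nonneg ζ]
    · change ‖A x‖ ≤ _
      linarith
  have : CompleteSpace A.graph := hA.isClosed.completeSpace_coe
  convert hanti.isClosed_range T.uniformContinuous using 1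
  ext y
  constructor
  · rintro ⟨x, rfl⟩
    exact ⟨⟨_, A.mem_graph x⟩, rfl⟩
  · rintro ⟨⟨⟨a, b⟩, hab⟩, rfl⟩
    obtain ⟨x, rfl, rfl⟩ := (LinearPMap.mem_graph_iff A).1 hab
    exact ⟨x, rfl⟩

theorem bijective_add_smul_subtype (hA : IsSelfAdjoint A) {ζ : ℂ} (hζ : ζ.im ≠ 0) :
    Function.Bijective (A.toFun + ζ • A.domain.subtype) := by
  have hsymm := isFormalAdjoint_self_of_isSelfAdjoint hA
  have eq_zero {η : ℂ} (hη : η.im ≠ 0) {x : A.domain} (hx : A x + η • (x : H) = 0) : x = 0 := by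
    have h := abs_im_mul_norm_le hsymm η x
    rw [hx, norm_zero] at h
    simpa using nonpos_of_mul_nonpos_right h (abs_pos.2 hη)
  refine ⟨(injective_iff_map_eq_zero _).2 fun x hx => eq_zero hζ hx, LinearMap.range_eq_top.1 ?_⟩
  have := (isClosed_range_add_smul_subtype hA hζ).completeSpace_coe
  rw [← Submodule.orthogonal_eq_bot_iff, Submodule.eq_bot_iff]
  intro w hw
  have horth (x : A.domain) : ⟪w, A x + ζ • (x : H)⟫_ℂ = 0 :=
    Submodule.inner_left_of_mem_orthogonal (LinearMap.mem_range_self _ x) hw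
  obtain ⟨hmem, hAw⟩ := exists_apply_eq_of_isSelfAdjoint hA (y := w) (w := -(star ζ • w))
    fun x => by
      have h := horth x
      rw [inner_add_right, inner_smul_right] at h
      simpa [inner_smul_left] using (eq_neg_of_add_eq_zero_left h).symm
  have h0 := eq_zero (η := star ζ) (by simpa using hζ) (x := ⟨w, hmem⟩) (by simp [hAw])
  exact congrArg Subtype.val h0

/-- `R` is the resolvent `(A + ζ)⁻¹` of the unbounded operator `A`, as an everywhere defined
bounded operator. -/
structure IsResolventAt (A : H →ₗ.[ℂ] H) (ζ : ℂ) (R : H →L[ℂ] H) : Prop where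
  left_inv : ∀ x : A.domain, R (A x + ζ • (x : H)) = x
  right_inv : ∀ y, ∃ hy : R y ∈ A.domain, A ⟨R y, hy⟩ + ζ • R y = y

theorem exists_isResolventAt (hA : IsSelfAdjoint A) {ζ : ℂ} (hζ : ζ.im ≠ 0) :
    ∃ R, IsResolventAt A ζ R := by
  let e := LinearEquiv.ofBijective _ (bijective_add_smul_subtype hA hζ)
  have he (y : H) : A (e.symm y) + ζ • (e.symm y : H) = y := e.apply_symm_apply y
  refine ⟨(A.domain.subtype ∘ₗ e.symm.toLinearMap).mkContinuous |ζ.im|⁻¹ fun y => ?_,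
    fun x => congrArg Subtype.val (e.symm_apply_apply x), fun y => ⟨(e.symm y).2, he y⟩⟩
  have hbound := abs_im_mul_norm_le (isFormalAdjoint_self_of_isSelfAdjoint hA) ζ (e.symm y)
  rw [he] at hbound
  exact (le_inv_mul_iff₀ (abs_pos.2 hζ)).2 hbound

namespace IsResolventAt

theorem denseRange {E : Type*} [NormedAddCommGroup E] [InnerProductSpace ℂ E] {A : E →ₗ.[ℂ] E}
    {R : E →L[ℂ] E} {ζ : ℂ} (hR : IsResolventAt A ζ R) (hA : Dense (A.domain : Set E)) :
    DenseRange R :=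
  hA.mono fun x hx => ⟨_, hR.left_inv ⟨x, hx⟩⟩

/-- `1 - 2iR` is the Cayley transform `(A - i)(A + i)⁻¹`. -/
theorem one_sub_smul_mem_unitary (hR : IsResolventAt A Complex.I R) (hA : IsSelfAdjoint A) :
    1 - (2 * Complex.I) • R ∈ unitary (H →L[ℂ] H) := by
  set U : H →L[ℂ] H := 1 - (2 * Complex.I) • R with hU
  have hsymm := isFormalAdjoint_self_of_isSelfAdjoint hA
  have hU_apply (x : A.domain) : U (A x + Complex.I • (x : H)) = A x + (-Complex.I) • (x : H) := by
    simp only [hU, sub_apply, smul_apply, one_apply_eq_self, hR.left_inv]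
    module
  have hnorm (y : H) : ‖U y‖ = ‖y‖ := by
    obtain ⟨hy, hRy⟩ := hR.right_inv y
    have hsq := norm_sq_apply_add_smul hsymm Complex.I ⟨R y, hy⟩
    have hsq' := norm_sq_apply_add_smul hsymm (-Complex.I) ⟨R y, hy⟩
    rw [← hRy, hU_apply ⟨R y, hy⟩, ← sq_eq_sq₀ (norm_nonneg _) (norm_nonneg _), hsq, hsq']
    simp
  have hbij : Function.Bijective U := by
    refine ⟨(injective_iff_map_eq_zero U).2 fun y hy => ?_, fun y => ?_⟩
    · rw [← norm_eq_zero, ← hnorm, hy, norm_zero]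
    · obtain ⟨x, hx⟩ := (bijective_add_smul_subtype hA (ζ := -Complex.I) (by simp)).2 y
      exact ⟨_, (hU_apply x).trans hx⟩
  refine (ContinuousLinearMap.isUnit_iff_bijective.2 hbij).mem_unitary_of_star_mul_self ?_
  exact U.norm_map_iff_adjoint_comp_self.1 hnorm

theorem isStarNormal (hR : IsResolventAt A Complex.I R) (hA : IsSelfAdjoint A) :
    IsStarNormal R := by
  have hU := hR.one_sub_smul_mem_unitary hA
  have hcomm : Commute (star (1 - (2 * Complex.I) • R)) (1 - (2 * Complex.I) • R) :=
    (Unitary.star_mul_self_of_mem hU).trans (Unitary.mul_star_self_of_mem hU).symm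
  have hRU : R = (2 * Complex.I)⁻¹ • (1 - (1 - (2 * Complex.I) • R)) := by
    rw [sub_sub_cancel, inv_smul_smul₀ (by simp)]
  refine ⟨?_⟩
  rw [hRU, star_smul, star_sub, star_one]
  exact (((Commute.one_left _).sub_left
    ((Commute.one_right _).sub_right hcomm)).smul_left _).smul_right _

theorem mul_inv_re_add_I (hR : IsResolventAt A Complex.I R) (hA : IsSelfAdjoint A) {z : ℂ}
    (hz : z ∈ spectrum ℂ R) (h0 : z ≠ 0) : z * ((z⁻¹.re : ℂ) + Complex.I) = 1 := by
  have hmem : 1 - 2 * Complex.I * z ∈ spectrum ℂ (1 - (2 * Complex.I) • R) := by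
    have hsmul : (2 * Complex.I) * z ∈ spectrum ℂ ((2 * Complex.I) • R) :=
      spectrum.smul_mem_smul_iff (r := Units.mk0 (2 * Complex.I) (by simp)).2 hz
    rw [← map_one (algebraMap ℂ (H →L[ℂ] H)), ← spectrum.singleton_sub_eq]
    exact Set.sub_mem_sub rfl hsmul
  have hcircle : ‖1 - 2 * Complex.I * z‖ ^ 2 = 1 := by
    rw [mem_sphere_zero_iff_norm.1
      (spectrum.subset_circle_of_unitary (hR.one_sub_smul_mem_unitary hA) hmem), one_pow]
  have him : z⁻¹.im = 1 := by
    rw [Complex.inv_im, div_eq_one_iff_eq (Complex.normSq_pos.2 h0).ne', Complex.normSq_apply]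
    rw [← Complex.normSq_eq_norm_sq, Complex.normSq_apply] at hcircle
    simp only [Complex.sub_re, Complex.sub_im, Complex.one_re, Complex.one_im, Complex.mul_re,
      Complex.mul_im, Complex.re_ofNat, Complex.im_ofNat, Complex.I_re, Complex.I_im] at hcircle
    linarith
  have hinv : z⁻¹ = z⁻¹.re + Complex.I := by
    conv_lhs => rw [← Complex.re_add_im z⁻¹, him, Complex.ofReal_one, one_mul]
  rw [← hinv, mul_inv_cancel₀ h0]

end IsResolventAt

end Resolvent

section BoundedCalculus

open scoped BoundedContinuousFunction

/-- The symbol `z ↦ z f(re z⁻¹)` of the operator `f(A) (A + i)⁻¹` in the functional calculus of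
the resolvent `(A + i)⁻¹`. A nonzero point `z` of the spectrum of the resolvent comes from the
point `re z⁻¹` of the spectrum of `A`; the convention `0⁻¹ = 0` is harmless, as the symbol
vanishes at `z = 0`. -/
def resolventSymbol (f : ℝ → ℂ) (z : ℂ) : ℂ := z * f z⁻¹.re

theorem continuous_resolventSymbol (f : ℝ →ᵇ ℂ) : Continuous (resolventSymbol f) := by
  refine continuous_iff_continuousAt.2 fun z => ?_
  rcases eq_or_ne z 0 with rfl | hz
  · have hbound (w : ℂ) : ‖resolventSymbol f w‖ ≤ ‖w‖ * ‖f‖ := by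
      rw [resolventSymbol, norm_mul]
      gcongr
      exact f.norm_coe_le_norm _
    have hlim : Filter.Tendsto (fun w : ℂ => ‖w‖ * ‖f‖) (nhds 0) (nhds 0) := by
      simpa using (tendsto_norm_zero (E := ℂ)).mul_const ‖f‖
    rw [ContinuousAt, show resolventSymbol f 0 = 0 by simp [resolventSymbol]]
    exact squeeze_zero_norm hbound hlim
  · exact continuousAt_id.mul (f.continuous.continuousAt.comp
      (Complex.continuous_re.continuousAt.comp (continuousAt_inv₀ hz)))

theorem norm_cfc_apply_le {R : H →L[ℂ] H} {f g : ℂ → ℂ}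
    (hf : ContinuousOn f (spectrum ℂ R)) (hg : ContinuousOn g (spectrum ℂ R))
    (h : ∀ z ∈ spectrum ℂ R, ‖f z‖ ≤ ‖g z‖) (v : H) : ‖cfc f R v‖ ≤ ‖cfc g R v‖ := by
  have hsq {k : ℂ → ℂ} (hk : ContinuousOn k (spectrum ℂ R)) :
      ‖cfc k R v‖ ^ 2 = (⟪cfc (fun z => star (k z) * k z) R v, v⟫_ℂ).re := by
    rw [cfc_mul (fun z => star (k z)) k R, cfc_star]
    exact (cfc k R).apply_norm_sq_eq_inner_adjoint_left v
  have hle : cfc (fun z => star (f z) * f z) R ≤ cfc (fun z => star (g z) * g z) R := by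
    refine cfc_mono fun z hz => ?_
    simp only [Complex.star_def, Complex.conj_mul']
    exact_mod_cast pow_le_pow_left₀ (norm_nonneg _) (h z hz) 2
  have hpos := (ContinuousLinearMap.le_def _ _).1 hle |>.re_inner_nonneg_left v
  rw [sub_apply, inner_sub_left, map_sub] at hpos
  rw [← sq_le_sq₀ (norm_nonneg _) (norm_nonneg _), hsq hf, hsq hg]
  exact sub_nonneg.1 hpos

/-- The map `f ↦ f(A) (A + i)⁻¹` on bounded continuous functions, expressed through the resolvent
`R = (A + i)⁻¹`. -/
def resolventCalculus (R : H →L[ℂ] H) : (ℝ →ᵇ ℂ) →ₗ[ℂ] H →L[ℂ] H where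
  toFun f := cfc (resolventSymbol f) R
  map_add' f g := by
    rw [← cfc_add R _ _ (continuous_resolventSymbol f).continuousOn
      (continuous_resolventSymbol g).continuousOn]
    exact congrArg (cfc · R) (funext fun z => mul_add _ _ _)
  map_smul' c f := by
    rw [RingHom.id_apply, ← cfc_smul c _ R (continuous_resolventSymbol f).continuousOn]
    exact congrArg (cfc · R) (funext fun z => mul_smul_comm c z (f z⁻¹.re))

theorem resolventCalculus_one (R : H →L[ℂ] H) [IsStarNormal R] : resolventCalculus R 1 = R := by
  have hsymbol : resolventSymbol (1 : ℝ →ᵇ ℂ) = id := funext fun z => mul_one z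
  exact (congrArg (cfc · R) hsymbol).trans (cfc_id ℂ R)

theorem norm_resolventCalculus_apply_le (R : H →L[ℂ] H) [IsStarNormal R] (f : ℝ →ᵇ ℂ) (v : H) :
    ‖resolventCalculus R f v‖ ≤ ‖f‖ * ‖R v‖ := by
  have hcfc : cfc (fun z => (‖f‖ : ℂ) * z) R = (‖f‖ : ℂ) • R := by
    rw [cfc_const_mul _ _ R, cfc_id' ℂ R]
  have h := norm_cfc_apply_le (R := R) (continuous_resolventSymbol f).continuousOn
    (g := fun z => (‖f‖ : ℂ) * z) (by fun_prop) (fun z _ => ?_) v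
  · rwa [hcfc, smul_apply, norm_smul, Complex.norm_real, norm_norm] at h
  · rw [resolventSymbol, norm_mul, norm_mul, Complex.norm_real, norm_norm, mul_comm]
    gcongr
    exact f.norm_coe_le_norm _

namespace IsResolventAt

variable {A : H →ₗ.[ℂ] H} {R : H →L[ℂ] H}

theorem mul_resolventCalculus (hR : IsResolventAt A Complex.I R) (hA : IsSelfAdjoint A)
    {f g : ℝ →ᵇ ℂ} (hfg : ∀ t, g t = (t + Complex.I) * f t) :
    R * resolventCalculus R g = resolventCalculus R f := by
  have := hR.isStarNormal hA
  have hmul : R * cfc (resolventSymbol g) R = cfc (fun z => z * resolventSymbol g z) R := by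
    rw [cfc_mul (fun z => z) _ R continuousOn_id (continuous_resolventSymbol g).continuousOn,
      cfc_id' ℂ R]
  refine hmul.trans (cfc_congr fun z hz => ?_)
  rcases eq_or_ne z 0 with rfl | h0
  · simp [resolventSymbol]
  · rw [resolventSymbol, resolventSymbol, hfg]
    linear_combination z * f z⁻¹.re * hR.mul_inv_re_add_I hA hz h0

theorem norm_resolventCalculus_le (hR : IsResolventAt A Complex.I R) (hA : IsSelfAdjoint A)
    {f : ℝ →ᵇ ℂ} {c : ℝ} (hf : ∀ t : ℝ, ‖f t‖ ≤ c * ‖(t : ℂ) + Complex.I‖) :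
    ‖resolventCalculus R f‖ ≤ c := by
  have hc : 0 ≤ c := (norm_nonneg _).trans ((hf 0).trans_eq (by simp))
  refine norm_cfc_le hc fun z hz => ?_
  rcases eq_or_ne z 0 with rfl | h0
  · simpa [resolventSymbol] using hc
  · calc ‖resolventSymbol f z‖ ≤ ‖z‖ * (c * ‖(z⁻¹.re : ℂ) + Complex.I‖) := by
          rw [resolventSymbol, norm_mul]
          gcongr
          exact hf _
      _ = c * ‖z * ((z⁻¹.re : ℂ) + Complex.I)‖ := by rw [norm_mul]; ring
      _ = c := by rw [hR.mul_inv_re_add_I hA hz h0, norm_one, mul_one]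

theorem eq_of_mul_eq_mul (hR : IsResolventAt A Complex.I R) (hA : IsSelfAdjoint A)
    {S T : H →L[ℂ] H} (h : S * R = T * R) : S = T :=
  DFunLike.coe_injective ((hR.denseRange hA.dense_domain).equalizer S.continuous T.continuous
    (funext fun v => DFunLike.congr_fun h v))

theorem extendOfNorm_mul (hR : IsResolventAt A Complex.I R) (hA : IsSelfAdjoint A) (f : ℝ →ᵇ ℂ) :
    (resolventCalculus R f).toLinearMap.extendOfNorm R.toLinearMap * R =
      resolventCalculus R f := by
  have := hR.isStarNormal hA
  ext v
  exact LinearMap.extendOfNorm_eq (hR.denseRange hA.dense_domain)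
    ⟨‖f‖, norm_resolventCalculus_apply_le R f⟩ v

/-- The functional calculus `f ↦ f(A)` of a self-adjoint operator `A` with resolvent
`R = (A + i)⁻¹`, on bounded continuous functions: `f(A)` is the bounded extension of `f(A) R v`,
as a function of `R v`, from the dense range of `R`. -/
def boundedCalculus (hR : IsResolventAt A Complex.I R) (hA : IsSelfAdjoint A) :
    (ℝ →ᵇ ℂ) →L[ℂ] H →L[ℂ] H :=
  LinearMap.mkContinuous
    { toFun := fun f => (resolventCalculus R f).toLinearMap.extendOfNorm R.toLinearMap
      map_add' := fun f g => hR.eq_of_mul_eq_mul hA <| by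
        rw [add_mul, hR.extendOfNorm_mul hA, hR.extendOfNorm_mul hA, hR.extendOfNorm_mul hA,
          map_add]
      map_smul' := fun c f => hR.eq_of_mul_eq_mul hA <| by
        rw [smul_mul_assoc, hR.extendOfNorm_mul hA, hR.extendOfNorm_mul hA, map_smul,
          RingHom.id_apply] } 1
    fun f => by
      have := hR.isStarNormal hA
      rw [one_mul]
      exact LinearMap.opNorm_extendOfNorm_le (hR.denseRange hA.dense_domain) (norm_nonneg f)
        (norm_resolventCalculus_apply_le R f)

theorem boundedCalculus_mul (hR : IsResolventAt A Complex.I R) (hA : IsSelfAdjoint A)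
    (f : ℝ →ᵇ ℂ) : hR.boundedCalculus hA f * R = resolventCalculus R f :=
  hR.extendOfNorm_mul hA f

theorem norm_boundedCalculus_le (hR : IsResolventAt A Complex.I R) (hA : IsSelfAdjoint A)
    (f : ℝ →ᵇ ℂ) : ‖hR.boundedCalculus hA f‖ ≤ ‖f‖ := by
  simpa only [one_mul] using
    (hR.boundedCalculus hA).le_of_opNorm_le (LinearMap.mkContinuous_norm_le _ zero_le_one _) f

theorem boundedCalculus_one (hR : IsResolventAt A Complex.I R) (hA : IsSelfAdjoint A) :
    hR.boundedCalculus hA 1 = 1 := by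
  have := hR.isStarNormal hA
  refine hR.eq_of_mul_eq_mul hA ?_
  rw [boundedCalculus_mul, resolventCalculus_one, one_mul]

theorem mul_boundedCalculus (hR : IsResolventAt A Complex.I R) (hA : IsSelfAdjoint A)
    {f g : ℝ →ᵇ ℂ} (hfg : ∀ t, g t = (t + Complex.I) * f t) :
    R * hR.boundedCalculus hA g = hR.boundedCalculus hA f := by
  refine hR.eq_of_mul_eq_mul hA ?_
  rw [mul_assoc, boundedCalculus_mul, boundedCalculus_mul, hR.mul_resolventCalculus hA hfg]

theorem exists_apply_boundedCalculus_eq (hR : IsResolventAt A Complex.I R) (hA : IsSelfAdjoint A)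
    {f g : ℝ →ᵇ ℂ} (hfg : ∀ t, g t = t * f t) (u : H) :
    ∃ hu : hR.boundedCalculus hA f u ∈ A.domain,
      A ⟨hR.boundedCalculus hA f u, hu⟩ = hR.boundedCalculus hA g u := by
  have hresolvent : R * hR.boundedCalculus hA (g + Complex.I • f) = hR.boundedCalculus hA f :=
    hR.mul_boundedCalculus hA fun t => by simp [hfg, add_mul]
  have hu : R (hR.boundedCalculus hA (g + Complex.I • f) u) = hR.boundedCalculus hA f u :=
    DFunLike.congr_fun hresolvent u
  obtain ⟨hmem, hA_apply⟩ := hR.right_inv (hR.boundedCalculus hA (g + Complex.I • f) u)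
  simp only [hu] at hmem hA_apply
  have hsum : hR.boundedCalculus hA (g + Complex.I • f) u =
      hR.boundedCalculus hA g u + Complex.I • hR.boundedCalculus hA f u := by
    rw [map_add, map_smul, add_apply, smul_apply]
  exact ⟨hmem, add_right_cancel (hA_apply.trans hsum)⟩

end IsResolventAt

end BoundedCalculus

section Kernel

open scoped BoundedContinuousFunction

/-- The solution `x ↦ e^{-xt} / (1 + e^{-τt})` of `q' = -t q`, `q 0 + q τ = 1`. Whatever the sign
of `t`, it takes values in `[0, 1]` on `[0, τ]`. -/
def antiperiodicKernel (τ x t : ℝ) : ℝ := Real.exp (-(x * t)) / (1 + Real.exp (-(τ * t)))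

theorem antiperiodicKernel_nonneg (τ x t : ℝ) : 0 ≤ antiperiodicKernel τ x t := by
  unfold antiperiodicKernel
  positivity

theorem antiperiodicKernel_zero_add_self (τ t : ℝ) :
    antiperiodicKernel τ 0 t + antiperiodicKernel τ τ t = 1 := by
  have hpos : 1 + Real.exp (-(τ * t)) ≠ 0 := by positivity
  rw [antiperiodicKernel, antiperiodicKernel, zero_mul, neg_zero, Real.exp_zero, ← add_div,
    div_self hpos]

theorem continuous_antiperiodicKernel (τ x : ℝ) : Continuous (antiperiodicKernel τ x) :=
  Continuous.div (by fun_prop) (by fun_prop) fun t => by positivity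

theorem antiperiodicKernel_le_exp {τ x δ : ℝ} (hx : x ∈ Set.Icc δ (τ - δ)) (t : ℝ) :
    antiperiodicKernel τ x t ≤ Real.exp (-(δ * |t|)) := by
  obtain ⟨hδx, hxδ⟩ := hx
  rw [antiperiodicKernel, div_le_iff₀ (by positivity), mul_add, mul_one, ← Real.exp_add]
  rcases le_total 0 t with ht | ht
  · have : Real.exp (-(x * t)) ≤ Real.exp (-(δ * |t|)) := by
      rw [abs_of_nonneg ht]
      gcongr
    linarith [Real.exp_pos (-(δ * |t|) + -(τ * t))]
  · have : Real.exp (-(x * t)) ≤ Real.exp (-(δ * |t|) + -(τ * t)) := by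
      rw [abs_of_nonpos ht]
      gcongr
      nlinarith
    linarith [Real.exp_pos (-(δ * |t|))]

theorem antiperiodicKernel_le_one {τ x : ℝ} (hx : x ∈ Set.Icc 0 τ) (t : ℝ) :
    antiperiodicKernel τ x t ≤ 1 := by
  simpa using antiperiodicKernel_le_exp (δ := 0) (by simpa using hx) t

theorem abs_pow_mul_antiperiodicKernel_le {τ x δ : ℝ} (hδ : 0 < δ) (hx : x ∈ Set.Icc δ (τ - δ))
    (k : ℕ) (t : ℝ) : |t| ^ k * antiperiodicKernel τ x t ≤ k.factorial / δ ^ k := by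
  have hexp := Real.pow_div_factorial_le_exp (x := δ * |t|) (by positivity) k
  rw [div_le_iff₀ (by positivity), mul_pow] at hexp
  rw [le_div_iff₀ (by positivity)]
  calc |t| ^ k * antiperiodicKernel τ x t * δ ^ k
      ≤ |t| ^ k * Real.exp (-(δ * |t|)) * δ ^ k := by
        gcongr
        exact antiperiodicKernel_le_exp hx t
    _ = δ ^ k * |t| ^ k * Real.exp (-(δ * |t|)) := by ring
    _ ≤ Real.exp (δ * |t|) * k.factorial * Real.exp (-(δ * |t|)) := by gcongr
    _ = k.factorial := by rw [Real.exp_neg]; field_simp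

/-- The kernel is convex in `x`, hence lies above its tangents. -/
theorem antiperiodicKernel_sub_mul_le (τ x y t : ℝ) :
    antiperiodicKernel τ x t - (y - x) * t * antiperiodicKernel τ x t ≤
      antiperiodicKernel τ y t := by
  have hshift : antiperiodicKernel τ y t =
      Real.exp (-((y - x) * t)) * antiperiodicKernel τ x t := by
    rw [antiperiodicKernel, antiperiodicKernel, ← mul_div_assoc, ← Real.exp_add]
    ring_nf
  rw [hshift]
  nlinarith [antiperiodicKernel_nonneg τ x t, Real.add_one_le_exp (-((y - x) * t))]

theorem abs_antiperiodicKernel_sub_le (τ x y t : ℝ) :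
    |antiperiodicKernel τ y t - antiperiodicKernel τ x t| ≤
      |y - x| * |t| * (antiperiodicKernel τ x t + antiperiodicKernel τ y t) := by
  have hx := antiperiodicKernel_nonneg τ x t
  have hy := antiperiodicKernel_nonneg τ y t
  rw [← abs_mul, abs_le]
  constructor <;>
    nlinarith [antiperiodicKernel_sub_mul_le τ x y t, antiperiodicKernel_sub_mul_le τ y x t,
      le_abs_self ((y - x) * t), neg_abs_le ((y - x) * t)]

theorem abs_antiperiodicKernel_sub_add_le (τ x y t : ℝ) :
    |antiperiodicKernel τ y t - antiperiodicKernel τ x t + (y - x) * t * antiperiodicKernel τ x t| ≤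
      (y - x) ^ 2 * (|t| ^ 2 * (antiperiodicKernel τ x t + antiperiodicKernel τ y t)) := by
  set qx := antiperiodicKernel τ x t
  set qy := antiperiodicKernel τ y t
  have hx : qx - (y - x) * t * qx ≤ qy := antiperiodicKernel_sub_mul_le τ x y t
  have hy : qy - (x - y) * t * qy ≤ qx := antiperiodicKernel_sub_mul_le τ y x t
  calc |qy - qx + (y - x) * t * qx| = qy - qx + (y - x) * t * qx := abs_of_nonneg (by linarith)
    _ ≤ -((y - x) * t * (qy - qx)) := by linarith
    _ ≤ |y - x| * |t| * |qy - qx| := by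
        rw [← abs_mul, ← abs_mul]
        exact neg_le_abs _
    _ ≤ |y - x| * |t| * (|y - x| * |t| * (qx + qy)) := by
        gcongr
        exact abs_antiperiodicKernel_sub_le τ x y t
    _ = (y - x) ^ 2 * (|t| ^ 2 * (qx + qy)) := by
        rw [← sq_abs (y - x)]
        ring

open scoped Classical in
/-- The function `t ↦ t ^ k * antiperiodicKernel τ x t` as a bounded continuous function. It is
bounded for `0 < x < τ`, and for `k = 0` also at the endpoints; where it is unbounded, the value
is `0` by convention. -/
def boundedKernel (τ : ℝ) (k : ℕ) (x : ℝ) : ℝ →ᵇ ℂ :=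
  if h : ∃ C, ∀ t : ℝ, |t| ^ k * antiperiodicKernel τ x t ≤ C then
    BoundedContinuousFunction.ofNormedAddCommGroup
      (fun t => ((t ^ k * antiperiodicKernel τ x t : ℝ) : ℂ))
      (Complex.continuous_ofReal.comp
        ((continuous_pow k).mul (continuous_antiperiodicKernel τ x)))
      h.choose fun t => by
        rw [Complex.norm_real, Real.norm_eq_abs, abs_mul, abs_pow,
          abs_of_nonneg (antiperiodicKernel_nonneg τ x t)]
        exact h.choose_spec t
  else 0

theorem boundedKernel_zero_apply {τ x : ℝ} (hx : x ∈ Set.Icc 0 τ) (t : ℝ) :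
    boundedKernel τ 0 x t = antiperiodicKernel τ x t := by
  have h : ∃ C, ∀ t : ℝ, |t| ^ 0 * antiperiodicKernel τ x t ≤ C :=
    ⟨1, fun t => by simpa using antiperiodicKernel_le_one hx t⟩
  simp [boundedKernel, dif_pos h]

theorem exists_mem_Ioo_margin {τ x : ℝ} (hx : x ∈ Set.Ioo 0 τ) :
    ∃ δ > 0, x ∈ Set.Ioo δ (τ - δ) := by
  obtain ⟨δ, hδ, hδmin⟩ := exists_between (lt_min hx.1 (sub_pos.2 hx.2))
  obtain ⟨hδx, hδτ⟩ := lt_min_iff.1 hδmin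
  exact ⟨δ, hδ, hδx, by linarith⟩

theorem boundedKernel_apply {τ x : ℝ} (hx : x ∈ Set.Ioo 0 τ) (k : ℕ) (t : ℝ) :
    boundedKernel τ k x t = t ^ k * antiperiodicKernel τ x t := by
  obtain ⟨δ, hδ, hxδ⟩ := exists_mem_Ioo_margin hx
  have h : ∃ C, ∀ t : ℝ, |t| ^ k * antiperiodicKernel τ x t ≤ C :=
    ⟨_, abs_pow_mul_antiperiodicKernel_le hδ (Set.Ioo_subset_Icc_self hxδ) k⟩
  simp [boundedKernel, dif_pos h]

theorem boundedKernel_zero_add_self {τ : ℝ} (hτ : 0 ≤ τ) :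
    boundedKernel τ 0 0 + boundedKernel τ 0 τ = 1 := by
  ext t
  rw [BoundedContinuousFunction.add_apply, boundedKernel_zero_apply (Set.left_mem_Icc.2 hτ),
    boundedKernel_zero_apply (Set.right_mem_Icc.2 hτ)]
  change _ = (1 : ℂ)
  exact_mod_cast antiperiodicKernel_zero_add_self τ t

theorem norm_boundedKernel_zero_le {τ x : ℝ} (hx : x ∈ Set.Icc 0 τ) :
    ‖boundedKernel τ 0 x‖ ≤ 1 := by
  refine (BoundedContinuousFunction.norm_le zero_le_one).2 fun t => ?_
  rw [boundedKernel_zero_apply hx, Complex.norm_real, Real.norm_eq_abs,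
    abs_of_nonneg (antiperiodicKernel_nonneg τ x t)]
  exact antiperiodicKernel_le_one hx t

theorem norm_boundedKernel_sub_add_le {τ δ x y : ℝ} (hδ : 0 < δ) (hx : x ∈ Set.Icc δ (τ - δ))
    (hy : y ∈ Set.Icc δ (τ - δ)) (k : ℕ) :
    ‖boundedKernel τ k y - boundedKernel τ k x + (y - x) • boundedKernel τ (k + 1) x‖ ≤
      2 * ((k + 2).factorial / δ ^ (k + 2)) * (y - x) ^ 2 := by
  have hIoo {z : ℝ} (hz : z ∈ Set.Icc δ (τ - δ)) : z ∈ Set.Ioo 0 τ :=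
    ⟨hδ.trans_le hz.1, by linarith [hz.2]⟩
  refine (BoundedContinuousFunction.norm_le (by positivity)).2 fun t => ?_
  have hval : (boundedKernel τ k y - boundedKernel τ k x +
      (y - x) • boundedKernel τ (k + 1) x) t =
      ((t ^ k * (antiperiodicKernel τ y t - antiperiodicKernel τ x t +
        (y - x) * t * antiperiodicKernel τ x t) : ℝ) : ℂ) := by
    simp only [BoundedContinuousFunction.add_apply, BoundedContinuousFunction.sub_apply,
      BoundedContinuousFunction.smul_apply, boundedKernel_apply (hIoo hx),
      boundedKernel_apply (hIoo hy), Complex.real_smul]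
    push_cast
    ring
  rw [hval, Complex.norm_real, Real.norm_eq_abs, abs_mul, abs_pow]
  calc |t| ^ k * |antiperiodicKernel τ y t - antiperiodicKernel τ x t +
        (y - x) * t * antiperiodicKernel τ x t|
      ≤ |t| ^ k * ((y - x) ^ 2 *
          (|t| ^ 2 * (antiperiodicKernel τ x t + antiperiodicKernel τ y t))) := by
        gcongr
        exact abs_antiperiodicKernel_sub_add_le τ x y t
    _ = (y - x) ^ 2 * (|t| ^ (k + 2) * antiperiodicKernel τ x t +
          |t| ^ (k + 2) * antiperiodicKernel τ y t) := by ring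
    _ ≤ (y - x) ^ 2 * ((k + 2).factorial / δ ^ (k + 2) + (k + 2).factorial / δ ^ (k + 2)) := by
        gcongr
        · exact abs_pow_mul_antiperiodicKernel_le hδ hx (k + 2) t
        · exact abs_pow_mul_antiperiodicKernel_le hδ hy (k + 2) t
    _ = 2 * ((k + 2).factorial / δ ^ (k + 2)) * (y - x) ^ 2 := by ring

theorem hasDerivAt_boundedKernel {τ x : ℝ} (hx : x ∈ Set.Ioo 0 τ) (k : ℕ) :
    HasDerivAt (boundedKernel τ k) (-boundedKernel τ (k + 1) x) x := by
  obtain ⟨δ, hδ, hxδ⟩ := exists_mem_Ioo_margin hx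
  rw [hasDerivAt_iff_isLittleO]
  refine Asymptotics.IsBigO.trans_isLittleO (g := fun y => ‖y - x‖ ^ 2) ?_
    (Asymptotics.isLittleO_pow_sub_sub x one_lt_two)
  refine Asymptotics.IsBigO.of_bound (2 * ((k + 2).factorial / δ ^ (k + 2))) ?_
  filter_upwards [Ioo_mem_nhds hxδ.1 hxδ.2] with y hy
  rw [smul_neg, sub_neg_eq_add, norm_pow, norm_norm, Real.norm_eq_abs, sq_abs]
  exact norm_boundedKernel_sub_add_le hδ (Set.Ioo_subset_Icc_self hxδ)
    (Set.Ioo_subset_Icc_self hy) k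

theorem norm_boundedKernel_zero_sub_apply_le {τ x y : ℝ} (hx : x ∈ Set.Icc 0 τ)
    (hy : y ∈ Set.Icc 0 τ) (t : ℝ) :
    ‖(boundedKernel τ 0 y - boundedKernel τ 0 x) t‖ ≤ 2 * |y - x| * ‖(t : ℂ) + Complex.I‖ := by
  have ht : |t| ≤ ‖(t : ℂ) + Complex.I‖ := by
    simpa using Complex.abs_re_le_norm ((t : ℂ) + Complex.I)
  have hsum : antiperiodicKernel τ x t + antiperiodicKernel τ y t ≤ 2 := by
    linarith [antiperiodicKernel_le_one hx t, antiperiodicKernel_le_one hy t]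
  rw [BoundedContinuousFunction.sub_apply, boundedKernel_zero_apply hx,
    boundedKernel_zero_apply hy, ← Complex.ofReal_sub, Complex.norm_real, Real.norm_eq_abs]
  calc |antiperiodicKernel τ y t - antiperiodicKernel τ x t|
      ≤ |y - x| * |t| * (antiperiodicKernel τ x t + antiperiodicKernel τ y t) :=
        abs_antiperiodicKernel_sub_le τ x y t
    _ ≤ |y - x| * ‖(t : ℂ) + Complex.I‖ * 2 := by
        gcongr
        exact add_nonneg (antiperiodicKernel_nonneg τ x t) (antiperiodicKernel_nonneg τ y t)
    _ = 2 * |y - x| * ‖(t : ℂ) + Complex.I‖ := by ring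

end Kernel

section Propagator

variable {E F : Type*} [NormedAddCommGroup E] [InnerProductSpace ℂ E]
  [NormedAddCommGroup F] [InnerProductSpace ℂ F]

theorem continuousOn_apply_of_denseRange {𝕜 X V W ι : Type*} [NontriviallyNormedField 𝕜]
    [TopologicalSpace X] [SeminormedAddCommGroup V] [NormedSpace 𝕜 V] [SeminormedAddCommGroup W]
    [NormedSpace 𝕜 W] {M : X → V →L[𝕜] W} {s : Set X} {C : ℝ} (hM : ∀ x ∈ s, ‖M x‖ ≤ C)
    {r : ι → V} (hr : DenseRange r) (hcont : ∀ i, ContinuousOn (fun x => M x (r i)) s) (u : V) :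
    ContinuousOn (fun x => M x u) s := by
  refine continuousOn_of_uniform_approx_of_continuousOn fun W hW => ?_
  obtain ⟨ε, hε, hεW⟩ := Metric.mem_uniformity_dist.1 hW
  have hpos : 0 < |C| + 1 := by positivity
  obtain ⟨i, hi⟩ := hr.exists_dist_lt u (div_pos hε hpos)
  refine ⟨_, hcont i, fun x hx => hεW ?_⟩
  rw [dist_eq_norm] at hi ⊢
  calc ‖M x u - M x (r i)‖ = ‖M x (u - r i)‖ := by rw [map_sub]
    _ ≤ (|C| + 1) * ‖u - r i‖ :=
        (M x).le_of_opNorm_le ((hM x hx).trans ((le_abs_self C).trans (by linarith))) _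
    _ < (|C| + 1) * (ε / (|C| + 1)) := by gcongr
    _ = ε := mul_div_cancel₀ ε (ne_of_gt hpos)

/-- `M` is the solution operator of the antiperiodic problem `ψ' = -B ψ`, `ψ 0 + ψ τ = u` on
`[0, τ]`: `ψ x = M x u` solves it for every `u`. -/
structure IsAntiperiodicPropagator (B : E →ₗ.[ℂ] E) (τ : ℝ) (M : ℝ → E →L[ℂ] E) : Prop where
  zero_add_self : M 0 + M τ = 1
  continuousOn : ∀ u, ContinuousOn (fun x => M x u) (Set.Icc 0 τ)
  isStrongSolutionOn : ∀ u, IsStrongSolutionOn B (fun _ => 0) (fun x => M x u) (Set.Ioo 0 τ)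

theorem IsAntiperiodicPropagator.conj {A : E →ₗ.[ℂ] E} {B : F →ₗ.[ℂ] F} {τ : ℝ}
    {M : ℝ → E →L[ℂ] E} (hM : IsAntiperiodicPropagator A τ M) (S : E ≃L[ℂ] F)
    (hS : ∀ x : A.domain, ∃ hx : S x ∈ B.domain, B ⟨S x, hx⟩ = S (A x)) :
    IsAntiperiodicPropagator B τ fun x => (S : E →L[ℂ] F) ∘L M x ∘L (S.symm : F →L[ℂ] E) where
  zero_add_self := by
    ext u
    have hsum : M 0 (S.symm u) + M τ (S.symm u) = S.symm u :=
      DFunLike.congr_fun hM.zero_add_self (S.symm u)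
    exact (map_add S _ _).symm.trans ((congrArg S hsum).trans (S.apply_symm_apply u))
  continuousOn u := S.continuous.comp_continuousOn (hM.continuousOn (S.symm u))
  isStrongSolutionOn u := by
    simpa using (hM.isStrongSolutionOn (S.symm u)).map (S : E →L[ℂ] F) hS

end Propagator

namespace IsResolventAt

variable {A : H →ₗ.[ℂ] H} {R : H →L[ℂ] H}

theorem continuousOn_boundedCalculus_boundedKernel (hR : IsResolventAt A Complex.I R)
    (hA : IsSelfAdjoint A) (τ : ℝ) (u : H) :
    ContinuousOn (fun x => hR.boundedCalculus hA (boundedKernel τ 0 x) u) (Set.Icc 0 τ) := by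
  refine continuousOn_apply_of_denseRange
    (fun x hx => (hR.norm_boundedCalculus_le hA _).trans (norm_boundedKernel_zero_le hx))
    (hR.denseRange hA.dense_domain) (fun v => ?_) u
  have hlip : LipschitzOnWith 2 (fun x => resolventCalculus R (boundedKernel τ 0 x))
      (Set.Icc 0 τ) := by
    refine LipschitzOnWith.of_dist_le_mul fun y hy x hx => ?_
    rw [dist_eq_norm, ← map_sub]
    exact hR.norm_resolventCalculus_le hA (norm_boundedKernel_zero_sub_apply_le hx hy)
  refine (hlip.continuousOn.clm_apply continuousOn_const (g := fun _ => v)).congr fun x _ => ?_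
  exact DFunLike.congr_fun (hR.boundedCalculus_mul hA (boundedKernel τ 0 x)) v

open scoped BoundedContinuousFunction in
theorem isStrongSolutionOn_boundedCalculus_boundedKernel (hR : IsResolventAt A Complex.I R)
    (hA : IsSelfAdjoint A) (τ : ℝ) (u : H) :
    IsStrongSolutionOn A (fun _ => 0)
      (fun x => hR.boundedCalculus hA (boundedKernel τ 0 x) u) (Set.Ioo 0 τ) := by
  let ev : (ℝ →ᵇ ℂ) →L[ℂ] H := (ContinuousLinearMap.apply ℂ H u).comp (hR.boundedCalculus hA)
  have hkernel : ContinuousOn (boundedKernel τ 1) (Set.Ioo 0 τ) :=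
    fun x hx => (hasDerivAt_boundedKernel hx 1).continuousAt.continuousWithinAt
  refine ⟨fun x => -ev (boundedKernel τ 1 x), (ev.continuous.comp_continuousOn hkernel).neg,
    fun x hx => ⟨?_, ?_⟩⟩
  · exact ((ev.restrictScalars ℝ).hasFDerivAt.comp_hasDerivAt x
      (hasDerivAt_boundedKernel hx 0)).congr_deriv (map_neg ev _)
  · obtain ⟨hmem, hA_apply⟩ := hR.exists_apply_boundedCalculus_eq hA
      (f := boundedKernel τ 0 x) (g := boundedKernel τ 1 x)
      (fun t => by simp only [boundedKernel_apply hx, pow_zero, pow_one, one_mul]) u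
    exact ⟨hmem, by rw [hA_apply, add_zero]; rfl⟩

theorem isAntiperiodicPropagator (hR : IsResolventAt A Complex.I R) (hA : IsSelfAdjoint A) {τ : ℝ}
    (hτ : 0 ≤ τ) :
    IsAntiperiodicPropagator A τ fun x => hR.boundedCalculus hA (boundedKernel τ 0 x) where
  zero_add_self := by rw [← map_add, boundedKernel_zero_add_self hτ, hR.boundedCalculus_one hA]
  continuousOn := hR.continuousOn_boundedCalculus_boundedKernel hA τ
  isStrongSolutionOn := hR.isStrongSolutionOn_boundedCalculus_boundedKernel hA τ

end IsResolventAt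

namespace SimilarToSelfAdjoint

variable {B : H →ₗ.[ℂ] H}

theorem exists_intertwining (hB : SimilarToSelfAdjoint B) :
    ∃ (S : H ≃L[ℂ] H) (A : H →ₗ.[ℂ] H), IsSelfAdjoint A ∧
      (∀ x : B.domain, ∃ hx : S x ∈ A.domain, A ⟨S x, hx⟩ = S (B x)) ∧
      ∀ y : A.domain, ∃ hy : S.symm y ∈ B.domain, B ⟨S.symm y, hy⟩ = S.symm (A y) := by
  obtain ⟨S, A, hA, hdom, hSA⟩ := hB
  have hmem (x : B.domain) : S x ∈ A.domain := by
    rw [← SetLike.mem_coe, hdom]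
    exact Set.mem_image_of_mem _ x.2
  refine ⟨S, A, hA, fun x => ⟨hmem x, hSA x (hmem x)⟩, fun ⟨y, hy⟩ => ?_⟩
  obtain ⟨x, hx, rfl⟩ : y ∈ (fun h => S h) '' (B.domain : Set H) := hdom ▸ hy
  simp only [hSA ⟨x, hx⟩ hy, S.symm_apply_apply]
  exact ⟨hx, trivial⟩

theorem exists_isAntiperiodicPropagator (hB : SimilarToSelfAdjoint B) {τ : ℝ} (hτ : 0 ≤ τ) :
    ∃ M, IsAntiperiodicPropagator B τ M := by
  obtain ⟨S, A, hA, -, hSB⟩ := hB.exists_intertwining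
  obtain ⟨R, hR⟩ := exists_isResolventAt hA (ζ := Complex.I) (by simp)
  exact ⟨_, (hR.isAntiperiodicPropagator hA hτ).conj S.symm hSB⟩

theorem eqOn_zero_of_antiperiodic (hB : SimilarToSelfAdjoint B) {ψ : ℝ → H} {τ : ℝ} (hτ : 0 ≤ τ)
    (hψ : ContinuousOn ψ (Set.Icc 0 τ))
    (h : IsStrongSolutionOn B (fun _ => 0) ψ (Set.Ioo 0 τ)) (hanti : ψ 0 + ψ τ = 0) :
    Set.EqOn ψ 0 (Set.Icc 0 τ) := by
  obtain ⟨S, A, hA, hSA, -⟩ := hB.exists_intertwining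
  have hSψ : IsStrongSolutionOn A (fun _ => 0) (fun x => S (ψ x)) (Set.Ioo 0 τ) := by
    simpa using h.map (S : H →L[ℂ] H) hSA
  have hzero := hSψ.eqOn_zero_of_antiperiodic (isFormalAdjoint_self_of_isSelfAdjoint hA) hτ
    (S.continuous.comp_continuousOn hψ) ((map_add S _ _).symm.trans (by rw [hanti, map_zero]))
  exact fun x hx => S.map_eq_zero_iff.1 (hzero hx)

end SimilarToSelfAdjoint

section BoundaryValueProblem

variable {J : H →L[ℂ] H} {B : H →ₗ.[ℂ] H} {τ : ℝ}

theorem IsAntiperiodicPropagator.surjective_boundary {M : ℝ → H →L[ℂ] H}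
    (hM : IsAntiperiodicPropagator B τ M) (hτ : 0 ≤ τ) (hJ : (J : H →ₗ[ℂ] H).IsSymmetric)
    (hJB : ∀ x : B.domain, 0 ≤ (⟪J (B x), (x : H)⟫_ℂ).re) :
    Function.Surjective fun u => Pplus J (M 0 u) + Pminus J (M τ u) := by
  have hsum (u : H) : M 0 u + M τ u = u := DFunLike.congr_fun hM.zero_add_self u
  have hcoercive (u : H) : ‖u‖ ^ 2 * 2⁻¹ ≤ ‖⟪Pplus J (M 0 u) + Pminus J (M τ u), u⟫_ℂ‖ := by
    have henergy := (hM.isStrongSolutionOn u).antitoneOn_reApplyInnerSelf hJ hJB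
      (hM.continuousOn u) (Set.left_mem_Icc.2 hτ) (Set.right_mem_Icc.2 hτ) hτ
    simpa only [hsum] using norm_sq_add_div_two_le_norm_inner hJ henergy
  have hunit := ContinuousLinearMap.isUnit_of_forall_le_norm_inner_map
    (Pplus J ∘L M 0 + Pminus J ∘L M τ) (c := 2⁻¹) (by norm_num) hcoercive
  exact (ContinuousLinearMap.isUnit_iff_bijective.1 hunit).surjective

theorem SimilarToSelfAdjoint.eqOn_zero_of_boundary_eq_zero (hB : SimilarToSelfAdjoint B)
    (hτ : 0 ≤ τ) (hJ : (J : H →ₗ[ℂ] H).IsSymmetric)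
    (hJB : ∀ x : B.domain, 0 ≤ (⟪J (B x), (x : H)⟫_ℂ).re) {ψ : ℝ → H}
    (hψ : ContinuousOn ψ (Set.Icc 0 τ))
    (h : IsStrongSolutionOn B (fun _ => 0) ψ (Set.Ioo 0 τ))
    (hbdry : Pplus J (ψ 0) + Pminus J (ψ τ) = 0) : Set.EqOn ψ 0 (Set.Icc 0 τ) := by
  have henergy := h.antitoneOn_reApplyInnerSelf hJ hJB hψ (Set.left_mem_Icc.2 hτ)
    (Set.right_mem_Icc.2 hτ) hτ
  have hcoercive := norm_sq_add_div_two_le_norm_inner hJ henergy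
  rw [hbdry, inner_zero_left, norm_zero] at hcoercive
  have hanti : ‖ψ 0 + ψ τ‖ ^ 2 = 0 := by nlinarith [sq_nonneg ‖ψ 0 + ψ τ‖]
  exact hB.eqOn_zero_of_antiperiodic hτ hψ h (by simpa using hanti)

end BoundaryValueProblem

theorem statement0_general (J : H →L[ℂ] H) (hJ : IsSignatureOperator J)
    (L : H →ₗ.[ℂ] H) (hL : ∀ h : L.domain, 0 ≤ (⟪L h, (h : H)⟫_ℂ).re)
    (hsim : SimilarToSelfAdjoint (pmapComp J L)) (τ : ℝ) (hτ : 0 < τ)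
    (φp φm : H) (hφp : J φp = φp) (hφm : J φm = -φm) :
    (∃ ψ : ℝ → H,
        ContinuousOn ψ (Set.Icc 0 τ) ∧
        IsStrongSolutionOn (pmapComp J L) (fun _ => 0) ψ (Set.Ioo 0 τ) ∧
        Pplus J (ψ 0) = φp ∧ Pminus J (ψ τ) = φm) ∧
    (∀ ψ₁ ψ₂ : ℝ → H,
        (ContinuousOn ψ₁ (Set.Icc 0 τ) ∧
          IsStrongSolutionOn (pmapComp J L) (fun _ => 0) ψ₁ (Set.Ioo 0 τ) ∧
          Pplus J (ψ₁ 0) = φp ∧ Pminus J (ψ₁ τ) = φm) →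
        (ContinuousOn ψ₂ (Set.Icc 0 τ) ∧
          IsStrongSolutionOn (pmapComp J L) (fun _ => 0) ψ₂ (Set.Ioo 0 τ) ∧
          Pplus J (ψ₂ 0) = φp ∧ Pminus J (ψ₂ τ) = φm) →
        Set.EqOn ψ₁ ψ₂ (Set.Icc 0 τ)) := by
  have hJB (x : (pmapComp J L).domain) : 0 ≤ (⟪J (pmapComp J L x), (x : H)⟫_ℂ).re := by
    rw [show J (pmapComp J L x) = L x from hJ.apply_apply (L x)]
    exact hL x
  constructor
  · obtain ⟨M, hM⟩ := hsim.exists_isAntiperiodicPropagator hτ.le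
    obtain ⟨u, hu⟩ := hM.surjective_boundary hτ.le hJ.isSymmetric hJB (φp + φm)
    exact ⟨fun x => M x u, hM.continuousOn u, hM.isStrongSolutionOn u,
      (hJ.Pplus_add_Pminus_eq_iff hφp hφm).1 hu⟩
  · rintro ψ₁ ψ₂ ⟨hcont₁, hsol₁, hp₁, hm₁⟩ ⟨hcont₂, hsol₂, hp₂, hm₂⟩ x hx
    have hsol : IsStrongSolutionOn (pmapComp J L) (fun _ => 0) (fun x => ψ₁ x - ψ₂ x)
        (Set.Ioo 0 τ) := by simpa using hsol₁.sub hsol₂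
    have hzero := hsim.eqOn_zero_of_boundary_eq_zero hτ.le hJ.isSymmetric hJB
      (hcont₁.sub hcont₂) hsol (by simp [hp₁, hp₂, hm₁, hm₂])
    exact sub_eq_zero.1 (hzero hx)

/-- If `L = L* > 0` is densely defined and `B = JL` is similar to a
self-adjoint operator, then for all `φ₊ ∈ H₊`, `φ₋ ∈ H₋` and `0 < τ < ∞` the boundary value
problem `dψ/dx = -Bψ` on `(0,τ)`, `P₊ψ(0) = φ₊`, `P₋ψ(τ) = φ₋` has a unique strong solution. -/
theorem statement0 (J : H →L[ℂ] H) (hJ : IsSignatureOperator J)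
    (L : H →ₗ.[ℂ] H) (hdense : Dense (L.domain : Set H))
    (hLsa : IsSelfAdjoint L) (hLpos : IsPositivePMap L)
    (hsim : SimilarToSelfAdjoint (pmapComp J L))
    (τ : ℝ) (hτ : 0 < τ)
    (φp φm : H) (hφp : J φp = φp) (hφm : J φm = -φm) :
    (∃ ψ : ℝ → H,
        ContinuousOn ψ (Set.Icc 0 τ) ∧
        IsStrongSolutionOn (pmapComp J L) (fun _ => 0) ψ (Set.Ioo 0 τ) ∧
        Pplus J (ψ 0) = φp ∧ Pminus J (ψ τ) = φm) ∧
    (∀ ψ₁ ψ₂ : ℝ → H,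
        (ContinuousOn ψ₁ (Set.Icc 0 τ) ∧
          IsStrongSolutionOn (pmapComp J L) (fun _ => 0) ψ₁ (Set.Ioo 0 τ) ∧
          Pplus J (ψ₁ 0) = φp ∧ Pminus J (ψ₁ τ) = φm) →
        (ContinuousOn ψ₂ (Set.Icc 0 τ) ∧
          IsStrongSolutionOn (pmapComp J L) (fun _ => 0) ψ₂ (Set.Ioo 0 τ) ∧
          Pplus J (ψ₂ 0) = φp ∧ Pminus J (ψ₂ τ) = φm) →
        Set.EqOn ψ₁ ψ₂ (Set.Icc 0 τ)) := by
  exact statement0_general J hJ L hLpos.re_inner_nonneg hsim τ hτ φp φm hφp hφm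

end
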